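/- For all named GS4 derivations P with conclusion ⊢Γ,A∧B, the branch-labeled axiom graphs of the conjunction inversions are exactly the restrictions: ⟨⟨inv_l(P, A∧B)⟩⟩ = ⟨⟨P⟩⟩↾_{Γ,A} and ⟨⟨inv_r(P, A∧B)⟩⟩ = ⟨⟨P⟩⟩↾_{Γ,B}. -/

import Mathlib

open scoped Classical

noncomputable section

namespace GS4

/-- Named classical propositional formulas over atoms `α`, with names in `ℕ`. -/
inductive NForm (α : Type) : Type
  | atom : ℕ → α → NForm α
  | or   : NForm α → NForm α → NForm α
  | and  : NForm α → NForm α → NForm α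

variable {α : Type}

/-- Name-preserving De Morgan negation, w.r.t. an involution `bar` on atoms. -/
def negF (bar : α → α) : NForm α → NForm α
  | .atom x a => .atom x (bar a)
  | .or A B => .and (negF bar A) (negF bar B)
  | .and A B => .or (negF bar A) (negF bar B)

/-- The set of names occurring in a named formula. -/
def NForm.names : NForm α → Set ℕ
  | .atom x _ => {x}
  | .or A B => A.names ∪ B.names
  | .and A B => A.names ∪ B.names

/-- A named formula is sharing-free if every name occurs at most once in it. -/
def NForm.sharingFree : NForm α → Prop
  | .atom _ _ => True
  | .or A B => A.sharingFree ∧ B.sharingFree ∧ Disjoint A.names B.names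
  | .and A B => A.sharingFree ∧ B.sharingFree ∧ Disjoint A.names B.names

def NForm.isAtom : NForm α → Prop
  | .atom _ _ => True
  | _ => False

/-- Anonymous formulas (shapes): `A ≡ B` iff their shapes coincide. -/
inductive Shape (α : Type) : Type
  | atom : α → Shape α
  | or   : Shape α → Shape α → Shape α
  | and  : Shape α → Shape α → Shape α

def NForm.shape : NForm α → Shape α
  | .atom _ a => .atom a
  | .or A B => .or A.shape B.shape
  | .and A B => .and A.shape B.shape

/-- `HasAtom A x a`: the atomic formula `x:a` occurs in `A`. -/
def HasAtom : NForm α → ℕ → α → Prop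
  | .atom y b, x, a => y = x ∧ b = a
  | .or A B, x, a => HasAtom A x a ∨ HasAtom B x a
  | .and A B, x, a => HasAtom A x a ∨ HasAtom B x a

/-- Names of a finite set of named formulas. -/
def snames (Γ : Finset (NForm α)) : Set ℕ := ⋃ A ∈ Γ, A.names

/-- A finite set of named formulas is sharing-free if all its elements are
sharing-free with pairwise disjoint name sets. -/
def SFSet (Γ : Finset (NForm α)) : Prop :=
  (∀ A ∈ Γ, A.sharingFree) ∧
  ∀ A ∈ Γ, ∀ B ∈ Γ, A ≠ B → Disjoint A.names B.names

/-- `x:a` occurs in some formula of `Γ` (i.e. `Γ[x] = a` for sharing-free `Γ`). -/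
def HasAtomS (Γ : Finset (NForm α)) (x : ℕ) (a : α) : Prop :=
  ∃ A ∈ Γ, HasAtom A x a

/-- Branch sets of named formulas. -/
def BrF : NForm α → Set (Set ℕ)
  | .atom x _ => {{x}}
  | .or A B => {X | ∃ Y ∈ BrF A, ∃ Z ∈ BrF B, X = Y ∪ Z}
  | .and A B => BrF A ∪ BrF B

/-- Branch sets of sequents (finite sharing-free sets of named formulas). -/
def BrS (Γ : Finset (NForm α)) : Set (Set ℕ) :=
  {X | X ⊆ snames Γ ∧ ∀ A ∈ Γ, X ∩ A.names ∈ BrF A}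

/-! ## Branch-labeled name graphs -/

/-- A branch-labeled name graph: vertices and a relation between unordered
pairs of vertices and branch labels. -/
structure BLGraph : Type where
  verts : Set ℕ
  rel : Sym2 ℕ → Set ℕ → Prop

/-- Well-formedness of a bl-graph: related pairs consist of distinct vertices,
labels are sets of vertices, and each edge is included in its labels. -/
def BLGraph.IsBL (G : BLGraph) : Prop :=
  ∀ e X, G.rel e X → ¬ e.IsDiag ∧ X ⊆ G.verts ∧ ∀ v ∈ e, v ∈ X

def BLGraph.Edges (G : BLGraph) : Set (Sym2 ℕ) := {e | ∃ X, G.rel e X}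

def BLGraph.Br (G : BLGraph) : Set (Set ℕ) := {X | ∃ e, G.rel e X}

def BLGraph.union (G H : BLGraph) : BLGraph :=
  ⟨G.verts ∪ H.verts, fun e X => G.rel e X ∨ H.rel e X⟩

/-- Restriction `G↾_S` of a bl-graph. -/
def BLGraph.restrict (G : BLGraph) (S : Set ℕ) : BLGraph :=
  ⟨G.verts ∩ S, fun e X => G.rel e X ∧ X ⊆ S⟩

/-- The interface-relativized edge-branch relation `e ⊰^I_G X`. -/
def BLGraph.relI (G : BLGraph) (I : Set ℕ) (e : Sym2 ℕ) (X : Set ℕ) : Prop :=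
  ∃ Y, G.rel e Y ∧ X = Y \ I

/-- `z 0, …, z (n-1)` is an `X`-labeled alternating path between `G` and `H`
through the interface `I`. -/
def AltPath (G H : BLGraph) (I X : Set ℕ) (n : ℕ) (z : ℕ → ℕ) : Prop :=
  1 < n ∧
  (∀ i < n, ∀ j < n, z i = z j → i = j) ∧
  (∀ i, 0 < i → i + 1 < n → z i ∈ I) ∧
  ((∀ i, i + 1 < n →
      (Even i → G.relI I s(z i, z (i + 1)) X) ∧ (¬ Even i → H.relI I s(z i, z (i + 1)) X)) ∨
   (∀ i, i + 1 < n →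
      (Even i → H.relI I s(z i, z (i + 1)) X) ∧ (¬ Even i → G.relI I s(z i, z (i + 1)) X)))

/-- Composition of bl-graphs over an interface `I`. -/
def BLGraph.comp (G H : BLGraph) (I : Set ℕ) : BLGraph :=
  ⟨(G.verts ∪ H.verts) \ I,
   fun e X => ∃ n z, AltPath G H I X n z ∧ z 0 ∉ I ∧ z (n - 1) ∉ I ∧
     e = s(z 0, z (n - 1))⟩

/-- The weakening operator on bl-graphs: add vertices `V` and extend every
branch label by a member of `Brs`. -/
def blwk (V : Set ℕ) (Brs : Set (Set ℕ)) (G : BLGraph) : BLGraph :=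
  ⟨G.verts ∪ V, fun e X => ∃ Y Z, G.rel e Y ∧ Z ∈ Brs ∧ X = Y ∪ Z⟩

/-- The bl-identity graph `id_{A,C}` on a pair of dual formulas. -/
def blid : NForm α → NForm α → BLGraph
  | .atom x _, .atom y _ => ⟨{x, y}, fun e X => e = s(x, y) ∧ X = {x, y}⟩
  | .or A1 A2, .and C1 C2 =>
      (blwk A2.names (BrF A2) (blid A1 C1)).union (blwk A1.names (BrF A1) (blid A2 C2))
  | .and A1 A2, .or C1 C2 =>
      (blwk C2.names (BrF C2) (blid A1 C1)).union (blwk C1.names (BrF C1) (blid A2 C2))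
  | _, _ => ⟨∅, fun _ _ => False⟩

/-! ## Simple name graphs -/

/-- A simple name graph. -/
structure NGraph : Type where
  verts : Set ℕ
  edges : Set (Sym2 ℕ)

/-- Subgraph relation `H ⊑ G`. -/
def NGraph.Sub (H G : NGraph) : Prop := H.verts ⊆ G.verts ∧ H.edges ⊆ G.edges

def NGraph.union (G H : NGraph) : NGraph := ⟨G.verts ∪ H.verts, G.edges ∪ H.edges⟩

/-- Induced subgraph `G↾_S`. -/
def NGraph.restrict (G : NGraph) (S : Set ℕ) : NGraph :=
  ⟨G.verts ∩ S, {e ∈ G.edges | ∀ v ∈ e, v ∈ S}⟩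

/-- Alternating paths between simple name graphs through an interface. -/
def NAltPath (G H : NGraph) (I : Set ℕ) (n : ℕ) (z : ℕ → ℕ) : Prop :=
  0 < n ∧
  (∀ i < n, ∀ j < n, z i = z j → i = j) ∧
  (∀ i, 0 < i → i + 1 < n → z i ∈ I) ∧
  ((∀ i, i + 1 < n →
      (Even i → s(z i, z (i + 1)) ∈ G.edges) ∧ (¬ Even i → s(z i, z (i + 1)) ∈ H.edges)) ∨
   (∀ i, i + 1 < n →
      (Even i → s(z i, z (i + 1)) ∈ H.edges) ∧ (¬ Even i → s(z i, z (i + 1)) ∈ G.edges)))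

/-- Composition of simple name graphs over an interface. -/
def NGraph.comp (G H : NGraph) (I : Set ℕ) : NGraph :=
  ⟨(G.verts ∪ H.verts) \ I,
   {e | ∃ x y, x ≠ y ∧ x ∈ (G.verts ∪ H.verts) \ I ∧ y ∈ (G.verts ∪ H.verts) \ I ∧
        e = s(x, y) ∧ ∃ n z, NAltPath G H I n z ∧ z 0 = x ∧ z (n - 1) = y}⟩

/-- The identity graph `Id_{A,C}` on a pair of dual formulas. -/
def idg : NForm α → NForm α → NGraph
  | .atom x _, .atom y _ => ⟨{x, y}, {s(x, y)}⟩
  | .or A1 A2, .and C1 C2 => (idg A1 C1).union (idg A2 C2)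
  | .and A1 A2, .or C1 C2 => (idg A1 C1).union (idg A2 C2)
  | _, _ => ⟨∅, ∅⟩

/-- The edgeless (weakening) graph on the names of `Γ`. -/
def wkg (Γ : Finset (NForm α)) : NGraph := ⟨snames Γ, ∅⟩

/-! ## Named GS4 derivations -/

/-- Named GS4 derivation trees. -/
inductive Deriv (α : Type) : Type
  | ax (Γ : Finset (NForm α)) (A C : NForm α)
  | cut (A : NForm α) (P Q : Deriv α)
  | sup (P Q : Deriv α)
  | orI (A B : NForm α) (P : Deriv α)
  | andI (A B : NForm α) (P Q : Deriv α)

/-- Conclusion of a derivation tree. -/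
def concl : Deriv α → Finset (NForm α)
  | .ax Γ A C => insert A (insert C Γ)
  | .cut A P _ => (concl P).erase A
  | .sup P _ => concl P
  | .orI A B P => insert (NForm.or A B) (((concl P).erase A).erase B)
  | .andI A B P _ => insert (NForm.and A B) ((concl P).erase A)

/-- Well-formedness of derivation trees w.r.t. the atom involution `bar`:
each rule is applied correctly to sharing-free named sequents. -/
def WF (bar : α → α) : Deriv α → Prop
  | .ax Γ A C =>
      A.shape = (negF bar C).shape ∧
      A.sharingFree ∧ C.sharingFree ∧ SFSet Γ ∧
      Disjoint A.names C.names ∧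
      Disjoint A.names (snames Γ) ∧ Disjoint C.names (snames Γ)
  | .cut A P Q =>
      WF bar P ∧ WF bar Q ∧
      ∃ Γ : Finset (NForm α), A ∉ Γ ∧ negF bar A ∉ Γ ∧
        concl P = insert A Γ ∧ concl Q = insert (negF bar A) Γ ∧
        A.sharingFree ∧ SFSet Γ ∧ Disjoint A.names (snames Γ)
  | .sup P Q => WF bar P ∧ WF bar Q ∧ concl P = concl Q
  | .orI A B P =>
      WF bar P ∧
      ∃ Γ : Finset (NForm α), A ∉ Γ ∧ B ∉ Γ ∧ A ≠ B ∧
        concl P = insert A (insert B Γ) ∧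
        A.sharingFree ∧ B.sharingFree ∧ SFSet Γ ∧
        Disjoint A.names B.names ∧
        Disjoint A.names (snames Γ) ∧ Disjoint B.names (snames Γ)
  | .andI A B P Q =>
      WF bar P ∧ WF bar Q ∧
      ∃ Γ : Finset (NForm α), A ∉ Γ ∧ B ∉ Γ ∧
        concl P = insert A Γ ∧ concl Q = insert B Γ ∧
        A.sharingFree ∧ B.sharingFree ∧ SFSet Γ ∧
        Disjoint A.names B.names ∧
        Disjoint A.names (snames Γ) ∧ Disjoint B.names (snames Γ)

/-- A derivation is cut-free if it contains no cut rule. -/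
def CutFree : Deriv α → Prop
  | .ax _ _ _ => True
  | .cut _ _ _ => False
  | .sup P Q => CutFree P ∧ CutFree Q
  | .orI _ _ P => CutFree P
  | .andI _ _ P Q => CutFree P ∧ CutFree Q

/-- The branch-labeled axiom graph `⟨⟨P⟩⟩` of a derivation. -/
def blaxg : Deriv α → BLGraph
  | .ax Γ A C => blwk (snames Γ) (BrS Γ) (blid A C)
  | .cut A P Q => BLGraph.comp (blaxg P) (blaxg Q) A.names
  | .sup P Q => (blaxg P).union (blaxg Q)
  | .orI _ _ P => blaxg P
  | .andI _ _ P Q => (blaxg P).union (blaxg Q)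

/-- The (simple) axiom graph `⟦P⟧` of a derivation. -/
def axg : Deriv α → NGraph
  | .ax Γ A C => (wkg Γ).union (idg A C)
  | .cut A P Q => NGraph.comp (axg P) (axg Q) A.names
  | .sup P Q => (axg P).union (axg Q)
  | .orI _ _ P => axg P
  | .andI _ _ P Q => (axg P).union (axg Q)

/-! ## Inversion and isolation -/

/-- Inversion of a disjunction `D ∨ E` in the conclusion. -/
def inv (D E : NForm α) : Deriv α → Deriv α
  | .ax Γ A C =>
      if A = NForm.or D E then
        match C with
        | .and C1 C2 =>
            .andI C1 C2 (.ax (insert E Γ) D C1) (.ax (insert D Γ) E C2)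
        | _ => .ax Γ A C
      else if C = NForm.or D E then
        match A with
        | .and A1 A2 =>
            .andI A1 A2 (.ax (insert E Γ) A1 D) (.ax (insert D Γ) A2 E)
        | _ => .ax Γ A C
      else
        .ax (insert D (insert E (Γ.erase (NForm.or D E)))) A C
  | .cut A P Q => .cut A (inv D E P) (inv D E Q)
  | .sup P Q => .sup (inv D E P) (inv D E Q)
  | .orI A B P => if A = D ∧ B = E then P else .orI A B (inv D E P)
  | .andI A B P Q => .andI A B (inv D E P) (inv D E Q)

/-- Left inversion of a conjunction `D ∧ E` in the conclusion. -/
def invl (D E : NForm α) : Deriv α → Deriv α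
  | .ax Γ A C =>
      if A = NForm.and D E then
        match C with
        | .or C1 C2 => .orI C1 C2 (.ax (insert C2 Γ) D C1)
        | _ => .ax Γ A C
      else if C = NForm.and D E then
        match A with
        | .or A1 A2 => .orI A1 A2 (.ax (insert A2 Γ) A1 D)
        | _ => .ax Γ A C
      else
        .ax (insert D (Γ.erase (NForm.and D E))) A C
  | .cut A P Q => .cut A (invl D E P) (invl D E Q)
  | .sup P Q => .sup (invl D E P) (invl D E Q)
  | .orI A B P => .orI A B (invl D E P)
  | .andI A B P Q => if A = D ∧ B = E then P else .andI A B (invl D E P) (invl D E Q)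

/-- Right inversion of a conjunction `D ∧ E` in the conclusion. -/
def invr (D E : NForm α) : Deriv α → Deriv α
  | .ax Γ A C =>
      if A = NForm.and D E then
        match C with
        | .or C1 C2 => .orI C1 C2 (.ax (insert C1 Γ) E C2)
        | _ => .ax Γ A C
      else if C = NForm.and D E then
        match A with
        | .or A1 A2 => .orI A1 A2 (.ax (insert A1 Γ) A2 E)
        | _ => .ax Γ A C
      else
        .ax (insert E (Γ.erase (NForm.and D E))) A C
  | .cut A P Q => .cut A (invr D E P) (invr D E Q)
  | .sup P Q => .sup (invr D E P) (invr D E Q)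
  | .orI A B P => .orI A B (invr D E P)
  | .andI A B P Q => if A = D ∧ B = E then Q else .andI A B (invr D E P) (invr D E Q)

/-- Isolation of a non-atomic formula in the conclusion. -/
def isl : NForm α → Deriv α → Deriv α
  | .or A B, P => .orI A B (inv A B P)
  | .and A B, P => .andI A B (invl A B P) (invr A B P)
  | .atom _ _, P => P

/-- Totality of a bl-graph w.r.t. a sharing-free named sequent. -/
def Total (bar : α → α) (G : BLGraph) (Γ : Finset (NForm α)) : Prop :=
  G.verts = snames Γ ∧
  G.Br = BrS Γ ∧
  ∀ x y : ℕ, s(x, y) ∈ G.Edges →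
    ∀ a b : α, HasAtomS Γ x a → HasAtomS Γ y b → a = bar b

end GS4

namespace GS4

section Inversion

variable {α : Type}

theorem BLGraph.ext' {G H : BLGraph} (hv : G.verts = H.verts)
    (hr : ∀ e X, G.rel e X ↔ H.rel e X) : G = H := by
  cases G; cases H
  simp only [BLGraph.mk.injEq]
  exact ⟨hv, funext fun e => funext fun X => propext (hr e X)⟩

/-! ### Names and branches -/

theorem names_negF (bar : α → α) (A : NForm α) : (negF bar A).names = A.names := by
  induction A <;> simp_all [negF, NForm.names]

theorem mem_snames {Γ : Finset (NForm α)} {x : ℕ} :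
    x ∈ snames Γ ↔ ∃ A ∈ Γ, x ∈ A.names := by
  simp [snames]

theorem snames_insert (A : NForm α) (Γ : Finset (NForm α)) :
    snames (insert A Γ) = A.names ∪ snames Γ := by
  simp [snames]

theorem names_subset_snames {A : NForm α} {Γ : Finset (NForm α)} (h : A ∈ Γ) :
    A.names ⊆ snames Γ := fun _ hx => mem_snames.2 ⟨A, h, hx⟩

theorem subset_names_of_mem_BrF {A : NForm α} {X : Set ℕ} (h : X ∈ BrF A) : X ⊆ A.names := by
  induction A generalizing X with
  | atom x a => simp_all [BrF, NForm.names]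
  | or A B ihA ihB =>
    obtain ⟨Y, hY, Z, hZ, rfl⟩ := h
    exact Set.union_subset_union (ihA hY) (ihB hZ)
  | and A B ihA ihB =>
    rcases h with h | h
    · exact (ihA h).trans Set.subset_union_left
    · exact (ihB h).trans Set.subset_union_right

theorem nonempty_of_mem_BrF {A : NForm α} {X : Set ℕ} (h : X ∈ BrF A) : X.Nonempty := by
  induction A generalizing X with
  | atom x a => simp_all [BrF]
  | or A B ihA ihB =>
    obtain ⟨Y, hY, Z, hZ, rfl⟩ := h
    exact (ihA hY).inl
  | and A B ihA ihB => exact h.elim (fun h => ihA h) (fun h => ihB h)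

theorem SFSet_insert {A : NForm α} {Γ : Finset (NForm α)} (hA : A.sharingFree) (hΓ : SFSet Γ)
    (hd : Disjoint A.names (snames Γ)) : SFSet (insert A Γ) := by
  refine ⟨?_, ?_⟩
  · intro B hB
    rcases Finset.mem_insert.1 hB with rfl | hB
    exacts [hA, hΓ.1 B hB]
  · intro B hB C hC hne
    rcases Finset.mem_insert.1 hB with rfl | hBΓ <;>
      rcases Finset.mem_insert.1 hC with rfl | hCΓ
    · exact absurd rfl hne
    · exact hd.mono_right (names_subset_snames hCΓ)
    · exact (hd.mono_right (names_subset_snames hBΓ)).symm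
    · exact hΓ.2 B hBΓ C hCΓ hne

theorem SFSet.disjoint_snames {A : NForm α} {Γ : Finset (NForm α)} (hA : A ∉ Γ)
    (h : SFSet (insert A Γ)) : Disjoint A.names (snames Γ) := by
  rw [Set.disjoint_left]
  intro x hx hx'
  obtain ⟨B, hB, hxB⟩ := mem_snames.1 hx'
  refine Set.disjoint_left.1 (h.2 A (Finset.mem_insert_self _ _) B
    (Finset.mem_insert_of_mem hB) ?_) hx hxB
  rintro rfl
  exact hA hB

theorem mem_BrS_insert {A : NForm α} {Γ : Finset (NForm α)} (hd : Disjoint A.names (snames Γ))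
    {X : Set ℕ} : X ∈ BrS (insert A Γ) ↔ ∃ Y ∈ BrF A, ∃ Z ∈ BrS Γ, X = Y ∪ Z := by
  constructor
  · rintro ⟨hX, hbr⟩
    rw [snames_insert] at hX
    refine ⟨X ∩ A.names, hbr A (Finset.mem_insert_self _ _), X ∩ snames Γ,
      ⟨Set.inter_subset_right, fun B hB => ?_⟩, ?_⟩
    · rw [Set.inter_assoc, Set.inter_eq_right.2 (names_subset_snames hB)]
      exact hbr B (Finset.mem_insert_of_mem hB)
    · rw [← Set.inter_union_distrib_left, Set.inter_eq_left.2 hX]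
  · rintro ⟨Y, hY, Z, ⟨hZ, hbr⟩, rfl⟩
    have hYA := subset_names_of_mem_BrF hY
    refine ⟨?_, fun B hB => ?_⟩
    · rw [snames_insert]
      exact Set.union_subset_union hYA hZ
    · rw [Set.union_inter_distrib_right]
      rcases Finset.mem_insert.1 hB with rfl | hB
      · rw [Set.inter_eq_left.2 hYA, (hd.symm.mono_left hZ).inter_eq, Set.union_empty]
        exact hY
      · rw [(hd.mono hYA (names_subset_snames hB)).inter_eq, Set.empty_union]
        exact hbr B hB

theorem inter_names_nonempty_of_mem_BrS {A : NForm α} {Γ : Finset (NForm α)} {X : Set ℕ}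
    (hA : A ∈ Γ) (hX : X ∈ BrS Γ) : (X ∩ A.names).Nonempty :=
  nonempty_of_mem_BrF (hX.2 A hA)

/-! ### Restriction of bl-graphs -/

theorem restrict_union (G H : BLGraph) (S : Set ℕ) :
    (G.union H).restrict S = (G.restrict S).union (H.restrict S) :=
  BLGraph.ext' (Set.union_inter_distrib_right _ _ _) fun _ _ => or_and_right

theorem BLGraph.union_comm (G H : BLGraph) : G.union H = H.union G :=
  BLGraph.ext' (Set.union_comm _ _) fun _ _ => or_comm

/-- Restricting a union to a set containing one side and no label of the other
gives back the first side. -/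
theorem restrict_union_eq_left {G H : BLGraph} {S : Set ℕ} (hG : G.verts ⊆ S)
    (hGr : ∀ e X, G.rel e X → X ⊆ S) (hH : H.verts ∩ S ⊆ G.verts)
    (hHr : ∀ e X, H.rel e X → ¬ X ⊆ S) : (G.union H).restrict S = G := by
  refine BLGraph.ext' ?_ fun e X => ⟨?_, fun h => ⟨Or.inl h, hGr e X h⟩⟩
  · refine Set.Subset.antisymm ?_ fun x hx => ⟨Or.inl hx, hG hx⟩
    rintro x ⟨hx | hx, hxS⟩
    exacts [hx, hH ⟨hx, hxS⟩]
  · rintro ⟨h | h, hX⟩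
    exacts [h, absurd hX (hHr e X h)]

theorem restrict_blwk (V : Set ℕ) (Brs : Set (Set ℕ)) (G : BLGraph) (S : Set ℕ) :
    (blwk V Brs G).restrict S = blwk (V ∩ S) {Z ∈ Brs | Z ⊆ S} (G.restrict S) := by
  refine BLGraph.ext' (Set.union_inter_distrib_right _ _ _) fun e X => ⟨?_, ?_⟩
  · rintro ⟨⟨Y, Z, hY, hZ, rfl⟩, hS⟩
    rw [Set.union_subset_iff] at hS
    exact ⟨Y, Z, ⟨hY, hS.1⟩, ⟨hZ, hS.2⟩, rfl⟩
  · rintro ⟨Y, Z, ⟨hY, hYS⟩, ⟨hZ, hZS⟩, rfl⟩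
    exact ⟨⟨Y, Z, hY, hZ, rfl⟩, Set.union_subset hYS hZS⟩

theorem restrict_eq_self {G : BLGraph} {S : Set ℕ} (hv : G.verts ⊆ S)
    (hr : ∀ e X, G.rel e X → X ⊆ S) : G.restrict S = G :=
  BLGraph.ext' (Set.inter_eq_left.2 hv) fun e X => ⟨And.left, fun h => ⟨h, hr e X h⟩⟩

theorem relI_restrict {G : BLGraph} {I S : Set ℕ} (hI : I ⊆ S) {e : Sym2 ℕ} {X : Set ℕ} :
    (G.restrict S).relI I e X ↔ G.relI I e X ∧ X ⊆ S := by
  constructor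
  · rintro ⟨Y, ⟨hY, hYS⟩, rfl⟩
    exact ⟨⟨Y, hY, rfl⟩, Set.sdiff_subset.trans hYS⟩
  · rintro ⟨⟨Y, hY, rfl⟩, hX⟩
    refine ⟨Y, ⟨hY, fun y hy => ?_⟩, rfl⟩
    by_cases hyI : y ∈ I
    exacts [hI hyI, hX ⟨hy, hyI⟩]

/-- Along an alternating path, membership of the label in `S` can be read off its first edge. -/
theorem altPath_restrict {G H : BLGraph} {I S X : Set ℕ} (hI : I ⊆ S) {n : ℕ} {z : ℕ → ℕ} :
    AltPath (G.restrict S) (H.restrict S) I X n z ↔ AltPath G H I X n z ∧ X ⊆ S := by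
  simp only [AltPath, relI_restrict hI]
  constructor
  · rintro ⟨hn, hinj, hint, h⟩
    refine ⟨⟨hn, hinj, hint, h.imp ?_ ?_⟩, ?_⟩
    · exact fun h i hi => ⟨fun he => ((h i hi).1 he).1, fun he => ((h i hi).2 he).1⟩
    · exact fun h i hi => ⟨fun he => ((h i hi).1 he).1, fun he => ((h i hi).2 he).1⟩
    · rcases h with h | h <;> exact ((h 0 (by omega)).1 Even.zero).2
  · rintro ⟨⟨hn, hinj, hint, h⟩, hX⟩
    refine ⟨hn, hinj, hint, h.imp ?_ ?_⟩ <;>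
    exact fun h i hi => ⟨fun he => ⟨(h i hi).1 he, hX⟩, fun he => ⟨(h i hi).2 he, hX⟩⟩

theorem restrict_comp (G H : BLGraph) {I S : Set ℕ} (hI : I ⊆ S) :
    (G.comp H I).restrict S = (G.restrict S).comp (H.restrict S) I := by
  refine BLGraph.ext' ?_ fun e X => ?_
  · ext x
    simp only [BLGraph.comp, BLGraph.restrict, Set.mem_inter_iff, Set.mem_sdiff, Set.mem_union]
    tauto
  · simp only [BLGraph.comp, BLGraph.restrict]
    constructor
    · rintro ⟨⟨n, z, h, h'⟩, hX⟩
      exact ⟨n, z, (altPath_restrict hI).2 ⟨h, hX⟩, h'⟩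
    · rintro ⟨n, z, h, h'⟩
      obtain ⟨h, hX⟩ := (altPath_restrict hI).1 h
      exact ⟨⟨n, z, h, h'⟩, hX⟩

theorem blwk_blwk_BrF {C : NForm α} {Γ : Finset (NForm α)} (hd : Disjoint C.names (snames Γ))
    (G : BLGraph) : blwk (snames Γ) (BrS Γ) (blwk C.names (BrF C) G) =
      blwk (snames (insert C Γ)) (BrS (insert C Γ)) G := by
  refine BLGraph.ext' ?_ fun e X => ⟨?_, ?_⟩
  · simp only [blwk, snames_insert, Set.union_assoc]
  · rintro ⟨_, Z, ⟨Y, W, hY, hW, rfl⟩, hZ, rfl⟩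
    exact ⟨Y, W ∪ Z, hY, (mem_BrS_insert hd).2 ⟨W, hW, Z, hZ, rfl⟩, Set.union_assoc _ _ _⟩
  · rintro ⟨Y, _, hY, hWZ, rfl⟩
    obtain ⟨W, hW, Z, hZ, rfl⟩ := (mem_BrS_insert hd).1 hWZ
    exact ⟨Y ∪ W, Z, ⟨Y, W, hY, hW, rfl⟩, hZ, (Set.union_assoc _ _ _).symm⟩

/-! ### Graphs covering a sequent -/

/-- The vertices of `G` are the names of `Γ`, and every label of `G` meets every formula of `Γ`. -/
def Covers (G : BLGraph) (Γ : Finset (NForm α)) : Prop :=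
  G.verts = snames Γ ∧
    ∀ e X, G.rel e X → X ⊆ snames Γ ∧ ∀ A ∈ Γ, (X ∩ A.names).Nonempty

theorem shape_eq_negF_or {bar : α → α} {A C₁ C₂ : NForm α}
    (h : A.shape = (negF bar (.or C₁ C₂)).shape) :
    ∃ A₁ A₂, A = .and A₁ A₂ ∧ A₁.shape = (negF bar C₁).shape ∧
      A₂.shape = (negF bar C₂).shape := by
  cases A <;> simp_all [NForm.shape, negF]

theorem shape_eq_negF_and {bar : α → α} {A C₁ C₂ : NForm α}
    (h : A.shape = (negF bar (.and C₁ C₂)).shape) :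
    ∃ A₁ A₂, A = .or A₁ A₂ ∧ A₁.shape = (negF bar C₁).shape ∧
      A₂.shape = (negF bar C₂).shape := by
  cases A <;> simp_all [NForm.shape, negF]

theorem shape_and_eq_negF {bar : α → α} {A₁ A₂ C : NForm α}
    (h : (NForm.and A₁ A₂).shape = (negF bar C).shape) :
    ∃ C₁ C₂, C = .or C₁ C₂ ∧ A₁.shape = (negF bar C₁).shape ∧
      A₂.shape = (negF bar C₂).shape := by
  cases C <;> simp_all [NForm.shape, negF]

theorem blid_verts {bar : α → α} {A C : NForm α} (h : A.shape = (negF bar C).shape) :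
    (blid A C).verts = A.names ∪ C.names := by
  induction C generalizing A with
  | atom y b =>
    cases A with
    | atom x a => rfl
    | or | and => simp [NForm.shape, negF] at h
  | or C₁ C₂ ih₁ ih₂ =>
    obtain ⟨A₁, A₂, rfl, h₁, h₂⟩ := shape_eq_negF_or h
    simp only [blid, BLGraph.union, blwk, ih₁ h₁, ih₂ h₂, NForm.names]
    ext; simp only [Set.mem_union]; tauto
  | and C₁ C₂ ih₁ ih₂ =>
    obtain ⟨A₁, A₂, rfl, h₁, h₂⟩ := shape_eq_negF_and h
    simp only [blid, BLGraph.union, blwk, ih₁ h₁, ih₂ h₂, NForm.names]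
    ext; simp only [Set.mem_union]; tauto

theorem blid_rel {bar : α → α} {A C : NForm α} (h : A.shape = (negF bar C).shape)
    {e : Sym2 ℕ} {X : Set ℕ} (hX : (blid A C).rel e X) :
    X ⊆ A.names ∪ C.names ∧ (X ∩ A.names).Nonempty ∧ (X ∩ C.names).Nonempty := by
  have key : ∀ {U V W Y Z U' V' : Set ℕ}, Y ⊆ U ∪ V → (Y ∩ U).Nonempty → (Y ∩ V).Nonempty →
      Z ⊆ W → U ⊆ U' → V ⊆ V' → W ⊆ U' ∪ V' →
      Y ∪ Z ⊆ U' ∪ V' ∧ ((Y ∪ Z) ∩ U').Nonempty ∧ ((Y ∪ Z) ∩ V').Nonempty :=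
    fun hY hU hV hZ hUU hVV hW =>
      ⟨Set.union_subset (hY.trans (Set.union_subset_union hUU hVV)) (hZ.trans hW),
        hU.mono (Set.inter_subset_inter Set.subset_union_left hUU),
        hV.mono (Set.inter_subset_inter Set.subset_union_left hVV)⟩
  induction C generalizing A X with
  | atom y b =>
    cases A with
    | atom x a =>
      obtain ⟨-, rfl⟩ := hX
      exact ⟨subset_rfl, ⟨x, by simp [NForm.names]⟩, ⟨y, by simp [NForm.names]⟩⟩
    | or | and => simp [NForm.shape, negF] at h
  | or C₁ C₂ ih₁ ih₂ =>
    obtain ⟨A₁, A₂, rfl, h₁, h₂⟩ := shape_eq_negF_or h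
    rcases hX with ⟨Y, Z, hY, hZ, rfl⟩ | ⟨Y, Z, hY, hZ, rfl⟩
    · obtain ⟨a, b, c⟩ := ih₁ h₁ hY
      exact key a b c (subset_names_of_mem_BrF hZ) Set.subset_union_left Set.subset_union_left
        (Set.subset_union_right.trans Set.subset_union_right)
    · obtain ⟨a, b, c⟩ := ih₂ h₂ hY
      exact key a b c (subset_names_of_mem_BrF hZ) Set.subset_union_right Set.subset_union_right
        (Set.subset_union_left.trans Set.subset_union_right)
  | and C₁ C₂ ih₁ ih₂ =>
    obtain ⟨A₁, A₂, rfl, h₁, h₂⟩ := shape_eq_negF_and h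
    rcases hX with ⟨Y, Z, hY, hZ, rfl⟩ | ⟨Y, Z, hY, hZ, rfl⟩
    · obtain ⟨a, b, c⟩ := ih₁ h₁ hY
      exact key a b c (subset_names_of_mem_BrF hZ) Set.subset_union_left Set.subset_union_left
        (Set.subset_union_right.trans Set.subset_union_left)
    · obtain ⟨a, b, c⟩ := ih₂ h₂ hY
      exact key a b c (subset_names_of_mem_BrF hZ) Set.subset_union_right Set.subset_union_right
        (Set.subset_union_left.trans Set.subset_union_left)

/-! ### Conclusions of well-formed derivations -/

theorem concl_cut {A : NForm α} {P Q : Deriv α} {Γ : Finset (NForm α)} (hA : A ∉ Γ)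
    (hc : concl P = insert A Γ) : concl (.cut A P Q) = Γ := by
  rw [concl, hc, Finset.erase_insert hA]

theorem concl_orI {A B : NForm α} {P : Deriv α} {Γ : Finset (NForm α)} (hA : A ∉ Γ)
    (hB : B ∉ Γ) (hAB : A ≠ B) (hc : concl P = insert A (insert B Γ)) :
    concl (.orI A B P) = insert (.or A B) Γ := by
  rw [concl, hc, Finset.erase_insert (by simp [hA, hAB]), Finset.erase_insert hB]

theorem concl_andI {A B : NForm α} {P Q : Deriv α} {Γ : Finset (NForm α)} (hA : A ∉ Γ)
    (hc : concl P = insert A Γ) : concl (.andI A B P Q) = insert (.and A B) Γ := by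
  rw [concl, hc, Finset.erase_insert hA]

theorem SFSet_concl {bar : α → α} {P : Deriv α} (hP : WF bar P) : SFSet (concl P) := by
  induction P with
  | ax Γ A C =>
    obtain ⟨-, hA, hC, hΓ, hAC, hAΓ, hCΓ⟩ := hP
    refine SFSet_insert hA (SFSet_insert hC hΓ hCΓ) ?_
    rw [snames_insert]
    exact hAC.union_right hAΓ
  | cut A P Q _ _ =>
    obtain ⟨-, -, Γ, hA, -, hc, -, -, hΓ, -⟩ := hP
    rwa [concl_cut hA hc]
  | sup P Q ihP _ => exact ihP hP.1
  | orI A B P _ =>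
    obtain ⟨-, Γ, hA, hB, hne, hc, hsA, hsB, hΓ, hAB, hAΓ, hBΓ⟩ := hP
    rw [concl_orI hA hB hne hc]
    exact SFSet_insert ⟨hsA, hsB, hAB⟩ hΓ (hAΓ.union_left hBΓ)
  | andI A B P Q _ _ =>
    obtain ⟨-, -, Γ, hA, hB, hc, -, hsA, hsB, hΓ, hAB, hAΓ, hBΓ⟩ := hP
    rw [concl_andI hA hc]
    exact SFSet_insert ⟨hsA, hsB, hAB⟩ hΓ (hAΓ.union_left hBΓ)

theorem Covers.relI {G : BLGraph} {A : NForm α} {Γ : Finset (NForm α)}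
    (h : Covers G (insert A Γ)) (hd : Disjoint A.names (snames Γ)) {e : Sym2 ℕ} {X : Set ℕ}
    (hX : G.relI A.names e X) : X ⊆ snames Γ ∧ ∀ B ∈ Γ, (X ∩ B.names).Nonempty := by
  obtain ⟨Y, hY, rfl⟩ := hX
  obtain ⟨hs, hm⟩ := h.2 e Y hY
  rw [snames_insert] at hs
  refine ⟨fun x hx => (hs hx.1).resolve_left hx.2, fun B hB => ?_⟩
  obtain ⟨x, hx, hxB⟩ := hm B (Finset.mem_insert_of_mem hB)
  exact ⟨x, ⟨hx, Set.disjoint_right.1 hd (names_subset_snames hB hxB)⟩, hxB⟩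

theorem covers_blaxg {bar : α → α} {P : Deriv α} (hP : WF bar P) :
    Covers (blaxg P) (concl P) := by
  induction P with
  | ax Γ A C =>
    obtain ⟨hs, -⟩ := hP
    constructor
    · simp only [blaxg, blwk, blid_verts hs, concl, snames_insert, Set.union_assoc]
    · rintro e _ ⟨Y, Z, hY, hZ, rfl⟩
      obtain ⟨h, hA, hC⟩ := blid_rel hs hY
      have hYA : ∀ {U : Set ℕ}, (Y ∩ U).Nonempty → ((Y ∪ Z) ∩ U).Nonempty :=
        fun hU => hU.mono (Set.inter_subset_inter_left _ Set.subset_union_left)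
      refine ⟨?_, fun B hB => ?_⟩
      · simp only [concl, snames_insert, ← Set.union_assoc]
        exact Set.union_subset_union h hZ.1
      · rcases Finset.mem_insert.1 hB with rfl | hB
        · exact hYA hA
        rcases Finset.mem_insert.1 hB with rfl | hB
        · exact hYA hC
        · exact (inter_names_nonempty_of_mem_BrS hB hZ).mono
            (Set.inter_subset_inter_left _ Set.subset_union_right)
  | cut A P Q ihP ihQ =>
    obtain ⟨hP, hQ, Γ, hA, -, hcP, hcQ, -, -, hd⟩ := hP
    have ihP := ihP hP
    have ihQ := ihQ hQ
    rw [hcP] at ihP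
    rw [hcQ] at ihQ
    rw [concl_cut hA hcP]
    constructor
    · simp only [blaxg, BLGraph.comp, ihP.1, ihQ.1, snames_insert, names_negF, Set.union_self]
      rw [Set.union_sdiff_left, hd.symm.sdiff_eq_left]
    · rintro e X ⟨n, z, ⟨hn, -, -, h | h⟩, -⟩
      · exact ihP.relI hd ((h 0 (by omega)).1 Even.zero)
      · have := (h 0 (by omega)).1 Even.zero
        rw [← names_negF bar] at this hd
        exact ihQ.relI hd this
  | sup P Q ihP ihQ =>
    obtain ⟨hP, hQ, hc⟩ := hP
    have ihQ := ihQ hQ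
    rw [← hc] at ihQ
    refine ⟨?_, fun e X h => h.elim ((ihP hP).2 e X) (ihQ.2 e X)⟩
    simp only [blaxg, BLGraph.union, (ihP hP).1, ihQ.1, concl, Set.union_self]
  | orI A B P ih =>
    obtain ⟨hP, Γ, hA, hB, hne, hc, -⟩ := hP
    have ih := ih hP
    have hn : snames (insert (.or A B) Γ) = snames (insert A (insert B Γ)) := by
      simp only [snames_insert, NForm.names, Set.union_assoc]
    rw [concl_orI hA hB hne hc]
    rw [hc] at ih
    refine ⟨ih.1.trans hn.symm, fun e X h => ?_⟩
    obtain ⟨hX, hm⟩ := ih.2 e X h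
    refine ⟨hn ▸ hX, fun C hC => ?_⟩
    rcases Finset.mem_insert.1 hC with rfl | hC
    · exact (hm A (by simp)).mono (Set.inter_subset_inter_right _ Set.subset_union_left)
    · exact hm C (by simp [hC])
  | andI A B P Q ihP ihQ =>
    obtain ⟨hP, hQ, Γ, hA, hB, hcP, hcQ, -⟩ := hP
    have ihP := ihP hP
    have ihQ := ihQ hQ
    rw [hcP] at ihP
    rw [hcQ] at ihQ
    rw [concl_andI hA hcP]
    constructor
    · simp only [blaxg, BLGraph.union, ihP.1, ihQ.1, snames_insert, NForm.names]
      ext; simp only [Set.mem_union]; tauto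
    · have lift : ∀ {C : NForm α} {X : Set ℕ}, C.names ⊆ (NForm.and A B).names →
          (X ⊆ snames (insert C Γ) ∧ ∀ D ∈ insert C Γ, (X ∩ D.names).Nonempty) →
          X ⊆ snames (insert (.and A B) Γ) ∧
            ∀ D ∈ insert (NForm.and A B) Γ, (X ∩ D.names).Nonempty := by
        rintro C X hC ⟨hX, hm⟩
        rw [snames_insert] at hX
        rw [snames_insert]
        refine ⟨hX.trans (Set.union_subset_union_left _ hC), fun D hD => ?_⟩
        rcases Finset.mem_insert.1 hD with rfl | hD
        · exact (hm C (Finset.mem_insert_self _ _)).mono (Set.inter_subset_inter_right _ hC)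
        · exact hm D (Finset.mem_insert_of_mem hD)
      rintro e X (h | h)
      · exact lift Set.subset_union_left (ihP.2 e X h)
      · exact lift Set.subset_union_right (ihQ.2 e X h)

/-! ### Inversion is restriction to the complement of the discarded conjunct -/

theorem Covers.subset_compl {G : BLGraph} {Γ : Finset (NForm α)} (h : Covers G Γ) {T : Set ℕ}
    (hd : Disjoint T (snames Γ)) : G.verts ⊆ Tᶜ ∧ ∀ e X, G.rel e X → X ⊆ Tᶜ := by
  have hΓ : snames Γ ⊆ Tᶜ := Set.subset_compl_iff_disjoint_left.2 hd
  exact ⟨h.1 ▸ hΓ, fun e X hX => (h.2 e X hX).1.trans hΓ⟩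

/-- In a union of graphs covering `⊢ Γ, A` and `⊢ Γ, B`, removing the names of `B` leaves the
first graph. -/
theorem restrict_union_of_covers {G H : BLGraph} {A B : NForm α} {Γ : Finset (NForm α)}
    (hG : Covers G (insert A Γ)) (hH : Covers H (insert B Γ)) (hAB : Disjoint A.names B.names)
    (hB : Disjoint B.names (snames Γ)) : (G.union H).restrict B.namesᶜ = G := by
  obtain ⟨hv, hr⟩ := hG.subset_compl (T := B.names)
    (by rw [snames_insert]; exact hAB.symm.union_right hB)
  refine restrict_union_eq_left hv hr ?_ fun e X h hX => ?_
  · rw [hG.1, hH.1, snames_insert, snames_insert]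
    rintro x ⟨hx | hx, hxB⟩
    exacts [absurd hx hxB, Or.inr hx]
  · obtain ⟨x, hx, hxB⟩ := (hH.2 e X h).2 B (Finset.mem_insert_self _ _)
    exact hX hx hxB

theorem restrict_ax_eq {D E C₁ C₂ : NForm α} {Γ : Finset (NForm α)} {G H : BLGraph}
    (hE : Disjoint E.names (snames Γ)) (hC : Disjoint C₂.names (snames Γ))
    (hGv : G.verts = D.names ∪ C₁.names) (hHv : H.verts = E.names ∪ C₂.names)
    (hGr : ∀ e X, G.rel e X → X ⊆ D.names ∪ C₁.names)
    (hHr : ∀ e X, H.rel e X → (X ∩ E.names).Nonempty)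
    (hED : Disjoint E.names D.names) (hE₁ : Disjoint E.names C₁.names)
    (hE₂ : Disjoint E.names C₂.names) :
    blwk (snames (insert C₂ Γ)) (BrS (insert C₂ Γ)) G =
      (blwk (snames Γ) (BrS Γ)
        ((blwk C₂.names (BrF C₂) G).union (blwk C₁.names (BrF C₁) H))).restrict E.namesᶜ := by
  have hcompl : ∀ {U : Set ℕ}, Disjoint E.names U → U ⊆ E.namesᶜ :=
    Set.subset_compl_iff_disjoint_left.2
  have hGE : D.names ∪ C₁.names ⊆ E.namesᶜ := hcompl (hED.union_right hE₁)
  have hΓ : {Z ∈ BrS Γ | Z ⊆ E.namesᶜ} = BrS Γ :=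
    Set.sep_eq_self_iff_mem_true.2 fun Z hZ => hZ.1.trans (hcompl hE)
  rw [restrict_blwk, Set.inter_eq_left.2 (hcompl hE), hΓ, restrict_union_eq_left,
    blwk_blwk_BrF hC]
  · exact Set.union_subset (hGv ▸ hGE) (hcompl hE₂)
  · rintro e _ ⟨Y, Z, hY, hZ, rfl⟩
    exact Set.union_subset ((hGr e Y hY).trans hGE)
      ((subset_names_of_mem_BrF hZ).trans (hcompl hE₂))
  · simp only [blwk, hGv, hHv]
    rintro x ⟨(hx | hx) | hx, hxE⟩
    exacts [absurd hx hxE, Or.inr hx, Or.inl (Or.inr hx)]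
  · rintro e _ ⟨Y, Z, hY, hZ, rfl⟩ hX
    obtain ⟨x, hx, hxE⟩ := hHr e Y hY
    exact hX (Or.inl hx) hxE

/-- Replacing a conjunction by one conjunct `D` amounts to discarding the branches through the
other conjunct `E`. -/
theorem BrS_insert_conjunct {D E F : NForm α} {Γ : Finset (NForm α)}
    (hF : F.names = D.names ∪ E.names) (hbr : BrF F = BrF D ∪ BrF E)
    (hDE : Disjoint D.names E.names) (hd : Disjoint F.names (snames Γ)) :
    {Z ∈ BrS (insert F Γ) | Z ⊆ E.namesᶜ} = BrS (insert D Γ) := by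
  have hDΓ : Disjoint D.names (snames Γ) := hd.mono_left (hF ▸ Set.subset_union_left)
  have hEΓ : Disjoint E.names (snames Γ) := hd.mono_left (hF ▸ Set.subset_union_right)
  ext X
  rw [Set.mem_sep_iff, mem_BrS_insert hd, mem_BrS_insert hDΓ, hbr]
  constructor
  · rintro ⟨⟨Y, hY | hY, Z, hZ, rfl⟩, hX⟩
    · exact ⟨Y, hY, Z, hZ, rfl⟩
    · obtain ⟨x, hx⟩ := nonempty_of_mem_BrF hY
      exact absurd (subset_names_of_mem_BrF hY hx) (hX (Or.inl hx))
  · rintro ⟨Y, hY, Z, hZ, rfl⟩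
    refine ⟨⟨Y, Or.inl hY, Z, hZ, rfl⟩, Set.union_subset ?_ ?_⟩
    · exact (subset_names_of_mem_BrF hY).trans (Set.subset_compl_iff_disjoint_right.2 hDE)
    · exact hZ.1.trans (Set.subset_compl_iff_disjoint_left.2 hEΓ)

theorem blwk_insert_conjunct {D E F : NForm α} {Γ : Finset (NForm α)} {G : BLGraph}
    (hF : F.names = D.names ∪ E.names) (hbr : BrF F = BrF D ∪ BrF E)
    (hDE : Disjoint D.names E.names) (hd : Disjoint F.names (snames Γ))
    (hGv : G.verts ⊆ E.namesᶜ) (hGr : ∀ e X, G.rel e X → X ⊆ E.namesᶜ) :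
    blwk (snames (insert D Γ)) (BrS (insert D Γ)) G =
      (blwk (snames (insert F Γ)) (BrS (insert F Γ)) G).restrict E.namesᶜ := by
  rw [restrict_blwk, BrS_insert_conjunct hF hbr hDE hd, restrict_eq_self hGv hGr,
    snames_insert, snames_insert, hF]
  congr 1
  have hEΓ : Disjoint E.names (snames Γ) := hd.mono_left (hF ▸ Set.subset_union_right)
  ext x
  have h₁ : x ∈ D.names → x ∉ E.names := fun h => Set.disjoint_left.1 hDE h
  have h₂ : x ∈ E.names → x ∉ snames Γ := fun h => Set.disjoint_left.1 hEΓ h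
  simp only [Set.mem_inter_iff, Set.mem_union, Set.mem_compl_iff]
  tauto

theorem blaxg_inv_ax {bar : α → α} {D E A C : NForm α} {Γ : Finset (NForm α)}
    (hP : WF bar (.ax Γ A C)) (hDE : NForm.and D E ∈ concl (.ax Γ A C)) :
    blaxg (invl D E (.ax Γ A C)) = (blaxg (.ax Γ A C)).restrict E.namesᶜ ∧
      blaxg (invr D E (.ax Γ A C)) = (blaxg (.ax Γ A C)).restrict D.namesᶜ := by
  obtain ⟨hs, hA, hC, hΓ, hAC, hAΓ, hCΓ⟩ := hP
  by_cases hAeq : A = .and D E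
  · subst hAeq
    obtain ⟨C₁, C₂, rfl, h₁, h₂⟩ := shape_and_eq_negF hs
    simp only [NForm.names, Set.disjoint_union_left, Set.disjoint_union_right] at hAC hAΓ hCΓ
    simp only [invl, invr, if_true, blaxg, blid]
    constructor
    · exact restrict_ax_eq hAΓ.2 hCΓ.2 (blid_verts h₁) (blid_verts h₂)
        (fun _ _ h => (blid_rel h₁ h).1) (fun _ _ h => (blid_rel h₂ h).2.1)
        hA.2.2.symm hAC.1.2 hAC.2.2
    · rw [BLGraph.union_comm]
      exact restrict_ax_eq hAΓ.1 hCΓ.1 (blid_verts h₂) (blid_verts h₁)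
        (fun _ _ h => (blid_rel h₂ h).1) (fun _ _ h => (blid_rel h₁ h).2.1)
        hA.2.2 hAC.2.1 hAC.1.1
  by_cases hCeq : C = .and D E
  · subst hCeq
    obtain ⟨A₁, A₂, rfl, h₁, h₂⟩ := shape_eq_negF_and hs
    simp only [NForm.names, Set.disjoint_union_left, Set.disjoint_union_right] at hAC hAΓ hCΓ
    simp only [invl, invr, if_true, blaxg, blid, reduceCtorEq, if_false]
    constructor
    · exact restrict_ax_eq hCΓ.2 hAΓ.2
        ((blid_verts h₁).trans (Set.union_comm _ _)) ((blid_verts h₂).trans (Set.union_comm _ _))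
        (fun _ _ h => Set.union_comm _ _ ▸ (blid_rel h₁ h).1) (fun _ _ h => (blid_rel h₂ h).2.2)
        hC.2.2.symm hAC.2.1.symm hAC.2.2.symm
    · rw [BLGraph.union_comm]
      exact restrict_ax_eq hCΓ.1 hAΓ.1
        ((blid_verts h₂).trans (Set.union_comm _ _)) ((blid_verts h₁).trans (Set.union_comm _ _))
        (fun _ _ h => Set.union_comm _ _ ▸ (blid_rel h₂ h).1) (fun _ _ h => (blid_rel h₁ h).2.2)
        hC.2.2 hAC.1.2.symm hAC.1.1.symm
  have hmem : NForm.and D E ∈ Γ := by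
    simpa [concl, Ne.symm hAeq, Ne.symm hCeq, eq_comm] using hDE
  obtain ⟨Δ, hΔ, rfl⟩ : ∃ Δ, NForm.and D E ∉ Δ ∧ Γ = insert (.and D E) Δ :=
    ⟨Γ.erase (.and D E), by simp, (Finset.insert_erase hmem).symm⟩
  have hd := SFSet.disjoint_snames hΔ hΓ
  have hsf : Disjoint D.names E.names := (hΓ.1 _ hmem).2.2
  have hsub : A.names ∪ C.names ⊆ (NForm.and D E).namesᶜ := by
    refine Set.subset_compl_iff_disjoint_left.2 (Disjoint.symm ?_)
    exact ((hAΓ.union_left hCΓ).mono_right (names_subset_snames hmem))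
  have hsubE : A.names ∪ C.names ⊆ E.namesᶜ :=
    hsub.trans (Set.compl_subset_compl.2 Set.subset_union_right)
  have hsubD : A.names ∪ C.names ⊆ D.namesᶜ :=
    hsub.trans (Set.compl_subset_compl.2 Set.subset_union_left)
  simp only [invl, invr, hAeq, hCeq, if_false, blaxg, Finset.erase_insert hΔ]
  exact ⟨blwk_insert_conjunct rfl rfl hsf hd (blid_verts hs ▸ hsubE)
      fun _ _ h => (blid_rel hs h).1.trans hsubE,
    blwk_insert_conjunct (Set.union_comm _ _) (Set.union_comm _ _) hsf.symm hd
      (blid_verts hs ▸ hsubD) fun _ _ h => (blid_rel hs h).1.trans hsubD⟩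

theorem blaxg_inv_and_compl {bar : α → α} {P : Deriv α} (hP : WF bar P) {D E : NForm α}
    (hDE : NForm.and D E ∈ concl P) :
    blaxg (invl D E P) = (blaxg P).restrict E.namesᶜ ∧
      blaxg (invr D E P) = (blaxg P).restrict D.namesᶜ := by
  induction P with
  | ax Γ A C => exact blaxg_inv_ax hP hDE
  | cut A P Q ihP ihQ =>
    obtain ⟨hP, hQ, Γ, hA, -, hcP, hcQ, -, -, hd⟩ := hP
    rw [concl_cut hA hcP] at hDE
    have ihP := ihP hP (by simp [hcP, hDE])
    have ihQ := ihQ hQ (by simp [hcQ, hDE])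
    have hd' := hd.mono_right (names_subset_snames hDE)
    simp only [NForm.names, Set.disjoint_union_right] at hd'
    simp only [invl, invr, blaxg, ihP, ihQ]
    rw [restrict_comp _ _ (Set.subset_compl_iff_disjoint_right.2 hd'.2),
      restrict_comp _ _ (Set.subset_compl_iff_disjoint_right.2 hd'.1)]
    exact ⟨rfl, rfl⟩
  | sup P Q ihP ihQ =>
    have ihP := ihP hP.1 hDE
    have ihQ := ihQ hP.2.1 (hP.2.2 ▸ hDE)
    simp only [invl, invr, blaxg, ihP, ihQ, restrict_union, and_self]
  | orI A B P ih =>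
    obtain ⟨hP, Γ, hA, hB, hne, hc, -⟩ := hP
    rw [concl_orI hA hB hne hc] at hDE
    have hΓ : NForm.and D E ∈ Γ := by simpa using hDE
    simpa only [invl, invr, blaxg] using ih hP (by simp [hc, hΓ])
  | andI A B P Q ihP ihQ =>
    obtain ⟨hP, hQ, Γ, hA, hB, hcP, hcQ, hsA, hsB, hsΓ, hAB, hAΓ, hBΓ⟩ := hP
    rw [concl_andI hA hcP] at hDE
    by_cases h : A = D ∧ B = E
    · obtain ⟨rfl, rfl⟩ := h
      have hP := covers_blaxg hP
      have hQ := covers_blaxg hQ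
      rw [hcP] at hP
      rw [hcQ] at hQ
      simp only [invl, invr, and_self, if_true, blaxg]
      refine ⟨(restrict_union_of_covers hP hQ hAB hBΓ).symm, ?_⟩
      rw [BLGraph.union_comm]
      exact (restrict_union_of_covers hQ hP hAB.symm hAΓ).symm
    · have hΓ : NForm.and D E ∈ Γ := by
        refine (Finset.mem_insert.1 hDE).resolve_left fun h' => h ?_
        simpa [eq_comm] using h'
      have ihP := ihP hP (by simp [hcP, hΓ])
      have ihQ := ihQ hQ (by simp [hcQ, hΓ])
      simp only [invl, invr, h, if_false, blaxg, ihP, ihQ, restrict_union, and_self]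

/-- Two restrictions agree as soon as the restricting sets agree on the vertices. -/
theorem Covers.restrict_congr {G : BLGraph} {Γ : Finset (NForm α)} (h : Covers G Γ)
    {S T : Set ℕ} (hST : ∀ x ∈ snames Γ, x ∈ S ↔ x ∈ T) : G.restrict S = G.restrict T := by
  refine BLGraph.ext' ?_ fun e X => and_congr_right fun hX => ?_
  · simp only [BLGraph.restrict, h.1]
    exact Set.ext fun x => and_congr_right (hST x)
  · exact forall₂_congr fun x hx => hST x ((h.2 e X hX).1 hx)

end Inversion

end GS4

/-- the branch-labeled axiom graphs of the conjunction
inversions are exactly the corresponding restrictions. -/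
theorem GS4.blaxg_inv_and {α : Type} (bar : α → α)
    (hbar : Function.Involutive bar) (hfix : ∀ a, bar a ≠ a)
    (P : GS4.Deriv α) (hP : GS4.WF bar P)
    (Γ : Finset (GS4.NForm α)) (A B : GS4.NForm α)
    (hAB : GS4.NForm.and A B ∉ Γ)
    (hc : GS4.concl P = insert (GS4.NForm.and A B) Γ) :
    GS4.blaxg (GS4.invl A B P) = (GS4.blaxg P).restrict (GS4.snames Γ ∪ A.names) ∧
    GS4.blaxg (GS4.invr A B P) = (GS4.blaxg P).restrict (GS4.snames Γ ∪ B.names) := by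
  have hcov := GS4.covers_blaxg hP
  have hsf := GS4.SFSet_concl hP
  rw [hc] at hcov hsf
  have hsAB : Disjoint A.names B.names := (hsf.1 _ (Finset.mem_insert_self _ _)).2.2
  have hd := hsf.disjoint_snames hAB
  simp only [GS4.NForm.names, Set.disjoint_union_left] at hd
  obtain ⟨hl, hr⟩ := GS4.blaxg_inv_and_compl hP (hc ▸ Finset.mem_insert_self _ _)
  rw [hl, hr]
  constructor <;> refine hcov.restrict_congr fun x hx => ?_ <;>
  · rw [GS4.snames_insert] at hx
    have h₁ : x ∈ A.names → x ∉ B.names := fun h => Set.disjoint_left.1 hsAB h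
    have h₂ : x ∈ A.names → x ∉ GS4.snames Γ := fun h => Set.disjoint_left.1 hd.1 h
    have h₃ : x ∈ B.names → x ∉ GS4.snames Γ := fun h => Set.disjoint_left.1 hd.2 h
    simp only [GS4.NForm.names, Set.mem_union, Set.mem_compl_iff] at hx ⊢
    tauto
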